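/- (Lemma 2) Let σ_N > 0, σ_S > 0 and set ρ = σ_S²/σ_N². The conditional differential entropy h_{Y|X} := −∫₀^∞ p_X(x) ( ∫₀^∞ p_{Y|X}(y|x) · log p_{Y|X}(y|x) dy ) dx is given in closed form by h_{Y|X} = log √(σ_S²) + 2(1 + ρ) − (1 + ρ⁻¹) · log(1 + ρ) − ρ⁻¹ · √(1 + ρ⁻¹) · F(ρ) − ψ(1)/2 − log 2, where F(ρ) = ∫₀^∞ ξ · K₁(√(1 + ρ⁻¹) · ξ) · I₁(ξ) · log I₁(ξ) dξ. -/

import Mathlib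

open Real MeasureTheory Set Filter

/-- Modified Bessel function of the first kind of order one,
`I₁(z) = ∑_{k=0}^∞ (z/2)^(2k+1) / (k! (k+1)!)`. -/
noncomputable def besselI1 (z : ℝ) : ℝ :=
  ∑' k : ℕ, (z / 2) ^ (2 * k + 1) / ((Nat.factorial k : ℝ) * (Nat.factorial (k + 1) : ℝ))

/-- Modified Bessel function of the second kind of order one,
`K₁(z) = ∫₀^∞ exp (−z cosh t) cosh t dt`. -/
noncomputable def besselK1 (z : ℝ) : ℝ :=
  ∫ t in Ioi (0 : ℝ), Real.exp (-z * Real.cosh t) * Real.cosh t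

/-- Digamma function `ψ(x) = d/dx log Γ(x)`. -/
noncomputable def digamma (x : ℝ) : ℝ :=
  deriv (fun y : ℝ => Real.log (Real.Gamma y)) x

/-- Conditional output density of the noncentral chi channel with four degrees of freedom. -/
noncomputable def condDensity (σN x y : ℝ) : ℝ :=
  (2 / σN ^ 2) * (y ^ 2 / x) * Real.exp (-(x ^ 2 + y ^ 2) / σN ^ 2) *
    besselI1 (2 * x * y / σN ^ 2)

/-- Rayleigh input density with mean-square `σS²`. -/
noncomputable def rayleighDensity (σS x : ℝ) : ℝ :=
  (2 * x / σS ^ 2) * Real.exp (-x ^ 2 / σS ^ 2)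

/-- `F(ρ) = ∫₀^∞ ξ K₁(√(1+ρ⁻¹) ξ) I₁(ξ) log I₁(ξ) dξ`. -/
noncomputable def Fint (ρ : ℝ) : ℝ :=
  ∫ ξ in Ioi (0 : ℝ),
    ξ * besselK1 (Real.sqrt (1 + ρ⁻¹) * ξ) * besselI1 ξ * Real.log (besselI1 ξ)

/-- Closed-form mutual information of Theorem 1. -/
noncomputable def Ixy (ρ : ℝ) : ℝ :=
  Real.log (ρ * Real.sqrt (1 + ρ⁻¹)) + ρ⁻¹ * Real.log (Real.sqrt (1 + ρ)) - ρ +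
    ρ⁻¹ * Real.sqrt (1 + ρ⁻¹) * Fint ρ + digamma ρ⁻¹ - digamma 1 - 1


theorem integral_Ioi_two_mul_comp_sq (g : ℝ → ℝ) :
    ∫ y in Ioi (0 : ℝ), 2 * y * g (y ^ 2) = ∫ u in Ioi (0 : ℝ), g u := by
  rw [← integral_comp_rpow_Ioi_of_pos (g := g) (p := 2) two_pos]
  refine setIntegral_congr_fun measurableSet_Ioi fun y _ => ?_
  norm_num

theorem integrableOn_Ioi_two_mul_comp_sq_iff (g : ℝ → ℝ) :
    IntegrableOn (fun y => 2 * y * g (y ^ 2)) (Ioi 0) ↔ IntegrableOn g (Ioi 0) := by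
  rw [← integrableOn_Ioi_comp_rpow_iff g (p := 2) two_ne_zero]
  refine integrableOn_congr_fun (fun y _ => ?_) measurableSet_Ioi
  norm_num

theorem integral_Ioi_pow_mul_exp_neg_mul (n : ℕ) {b : ℝ} (hb : 0 < b) :
    ∫ u in Ioi (0 : ℝ), u ^ n * exp (-b * u) = n.factorial / b ^ (n + 1) := by
  have h := integral_rpow_mul_exp_neg_mul_Ioi (a := n + 1) (r := b) (by positivity) hb
  rw [Gamma_nat_eq_factorial] at h
  simp only [add_sub_cancel_right, rpow_natCast, neg_mul_eq_neg_mul] at h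
  rw [h, ← Nat.cast_succ, rpow_natCast, Nat.succ_eq_add_one, one_div, inv_pow, div_eq_inv_mul]

theorem integral_Ioi_odd_pow_mul_gaussian (n : ℕ) {b : ℝ} (hb : 0 < b) :
    ∫ y in Ioi (0 : ℝ), y ^ (2 * n + 1) * exp (-b * y ^ 2) =
      n.factorial / (2 * b ^ (n + 1)) := by
  have h := integral_Ioi_two_mul_comp_sq fun u => u ^ n * exp (-b * u) / 2
  rw [integral_div, integral_Ioi_pow_mul_exp_neg_mul n hb] at h
  rw [mul_comm 2 (b ^ _), ← div_div, ← h]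
  refine integral_congr_ae (.of_forall fun y => ?_)
  simp only
  ring

theorem integrableOn_Ioi_odd_pow_mul_gaussian (n : ℕ) {b : ℝ} (hb : 0 < b) :
    IntegrableOn (fun y => y ^ (2 * n + 1) * exp (-b * y ^ 2)) (Ioi 0) :=
  .of_integral_ne_zero (by rw [integral_Ioi_odd_pow_mul_gaussian n hb]; positivity)

theorem integral_exp_neg_mul_log :
    ∫ u in Ioi (0 : ℝ), exp (-u) * log u = -eulerMascheroniConstant := by
  have h1 := Complex.hasDerivAt_GammaIntegral (s := 1) (by simp)
  have h2 : Complex.GammaIntegral =ᶠ[nhds 1] Complex.Gamma := by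
    have : ∀ᶠ s : ℂ in nhds 1, 0 < s.re :=
      Complex.continuous_re.continuousAt.eventually (lt_mem_nhds (by simp))
    filter_upwards [this] with s hs using (Complex.Gamma_eq_integral hs).symm
  have h3 := h1.unique (Complex.hasDerivAt_Gamma_one.congr_of_eventuallyEq h2)
  simp only [sub_self, Complex.cpow_zero, one_mul] at h3
  rw [← Complex.ofReal_inj, ← integral_complex_ofReal, Complex.ofReal_neg, ← h3]
  refine integral_congr_ae (.of_forall fun y => ?_)
  push_cast
  ring

theorem digamma_one : digamma 1 = -eulerMascheroniConstant := by
  have := (Real.hasDerivAt_Gamma_one.log (by simp)).deriv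
  simpa [digamma] using this

theorem integrableOn_exp_neg_mul_log : IntegrableOn (fun u => exp (-u) * log u) (Ioi 0) := by
  refine .of_integral_ne_zero ?_
  rw [integral_exp_neg_mul_log]
  linarith [one_half_lt_eulerMascheroniConstant]

theorem integrableOn_exp_neg_mul_mul_log {a : ℝ} (ha : 0 < a) :
    IntegrableOn (fun u => exp (-a * u) * log u) (Ioi 0) := by
  have h := (integrableOn_Ioi_comp_mul_left_iff (fun u => exp (-u) * log u) 0 ha).2
    (by simpa using integrableOn_exp_neg_mul_log)
  have h' := h.sub ((exp_neg_integrableOn_Ioi 0 ha).mul_const (log a))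
  refine h'.congr_fun (fun u hu => ?_) measurableSet_Ioi
  simp only [Pi.sub_apply, log_mul ha.ne' (ne_of_gt (mem_Ioi.1 hu)), neg_mul]
  ring

theorem integral_exp_neg_mul_mul_log {a : ℝ} (ha : 0 < a) :
    ∫ u in Ioi (0 : ℝ), exp (-a * u) * log u = (digamma 1 - log a) / a := by
  have h := integral_comp_mul_left_Ioi (fun u => exp (-u) * log u) 0 ha
  rw [mul_zero, integral_exp_neg_mul_log, ← digamma_one] at h
  have h0 := integral_Ioi_pow_mul_exp_neg_mul 0 ha
  simp only [pow_zero, one_mul] at h0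
  have h2 : ∫ u in Ioi (0 : ℝ), exp (-(a * u)) * log (a * u) =
      ∫ u in Ioi (0 : ℝ), (exp (-a * u) * log u + exp (-a * u) * log a) := by
    refine setIntegral_congr_fun measurableSet_Ioi fun u hu => ?_
    simp only [log_mul ha.ne' (ne_of_gt (mem_Ioi.1 hu)), neg_mul]
    ring
  rw [h2, integral_add (integrableOn_exp_neg_mul_mul_log ha)
    ((exp_neg_integrableOn_Ioi 0 ha).mul_const (log a)), integral_mul_const, h0] at h
  simp only [smul_eq_mul, Nat.factorial_zero, Nat.cast_one, zero_add, pow_one] at h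
  rw [sub_div, div_eq_inv_mul, ← h]
  ring

theorem integrableOn_gaussian_mul_log {a : ℝ} (ha : 0 < a) :
    IntegrableOn (fun y => 2 * y * exp (-a * y ^ 2) * log y) (Ioi 0) := by
  have h := ((integrableOn_Ioi_two_mul_comp_sq_iff _).2
    (integrableOn_exp_neg_mul_mul_log ha)).div_const 2
  refine IntegrableOn.congr_fun h (fun u hu => ?_) measurableSet_Ioi
  simp only [log_pow]
  push_cast
  ring

theorem integral_gaussian_mul_log {a : ℝ} (ha : 0 < a) :
    ∫ y in Ioi (0 : ℝ), 2 * y * exp (-a * y ^ 2) * log y = (digamma 1 - log a) / (2 * a) := by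
  have h := integral_Ioi_two_mul_comp_sq fun u => exp (-a * u) * log u
  rw [integral_exp_neg_mul_mul_log ha] at h
  rw [mul_comm 2 a, ← div_div, ← h, ← integral_div]
  refine integral_congr_ae (.of_forall fun y => ?_)
  simp only [log_pow]
  push_cast
  ring

theorem besselI1_term_summable (z : ℝ) :
    Summable fun k : ℕ =>
      (z / 2) ^ (2 * k + 1) / ((Nat.factorial k : ℝ) * (Nat.factorial (k + 1) : ℝ)) := by
  refine .of_norm_bounded
    ((Real.summable_pow_div_factorial ((z / 2) ^ 2)).mul_left |z / 2|) fun k => ?_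
  have h1 : (1 : ℝ) ≤ (k + 1).factorial := mod_cast Nat.factorial_pos _
  rw [norm_div, Real.norm_of_nonneg (r := (k.factorial : ℝ) * _) (by positivity), norm_pow,
    Real.norm_eq_abs, pow_succ, pow_mul, sq_abs, mul_comm, ← mul_div_assoc]
  gcongr
  exact le_mul_of_one_le_right (by positivity) h1

theorem half_le_besselI1 {z : ℝ} (hz : 0 ≤ z) : z / 2 ≤ besselI1 z := by
  have h := (besselI1_term_summable z).le_tsum 0 fun k _ => by positivity
  simpa [besselI1] using h

theorem besselI1_le {z : ℝ} (hz : 0 ≤ z) : besselI1 z ≤ z / 2 * exp z := by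
  have h := (Real.hasSum_cosh z).mul_left (z / 2)
  have h2 : besselI1 z ≤ z / 2 * cosh z := by
    refine hasSum_le (fun k => ?_) (besselI1_term_summable z).hasSum h
    have hc : ((2 * k).factorial : ℝ) ≤ 4 ^ k * (k.factorial * (k + 1).factorial) := by
      have h1 := Nat.choose_mul_factorial_mul_factorial (n := 2 * k) (k := k) (by lia)
      have h2 := Nat.choose_le_two_pow (2 * k) k
      rw [show 2 * k - k = k by lia] at h1
      rw [pow_mul] at h2
      have h3 : k.factorial ≤ (k + 1).factorial := Nat.factorial_le (by lia)
      norm_cast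
      rw [← h1, mul_assoc]
      gcongr
      exact h2
    have he : (z / 2) ^ (2 * k + 1) / ((k.factorial : ℝ) * ((k + 1).factorial : ℝ)) =
        z / 2 * (z ^ (2 * k) / (4 ^ k * (k.factorial * (k + 1).factorial))) := by
      rw [pow_succ, pow_mul, div_pow, div_pow, pow_mul]
      norm_num
      field_simp
    rw [he]
    gcongr
  refine h2.trans ?_
  gcongr
  rw [← cosh_add_sinh]
  linarith [sinh_nonneg_iff.2 hz]

theorem abs_log_besselI1_le {z : ℝ} (hz : 0 < z) :
    |log (besselI1 z)| ≤ |log (z / 2)| + z := by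
  have h1 := log_le_log (by positivity) (half_le_besselI1 hz.le)
  have h2 := log_le_log (lt_of_lt_of_le (by positivity) (half_le_besselI1 hz.le))
    (besselI1_le hz.le)
  rw [log_mul (by positivity) (exp_pos z).ne', log_exp] at h2
  rw [abs_le]
  constructor
  · linarith [neg_abs_le (log (z / 2))]
  · linarith [le_abs_self (log (z / 2))]

theorem measurable_besselI1 : Measurable besselI1 := by
  refine measurable_of_tendsto_metrizable (f := fun n z => ∑ k ∈ Finset.range n,
    (z / 2) ^ (2 * k + 1) / ((Nat.factorial k : ℝ) * (Nat.factorial (k + 1) : ℝ)))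
    (fun n => by fun_prop) ?_
  rw [tendsto_pi_nhds]
  exact fun z => (besselI1_term_summable z).hasSum.tendsto_sum_nat

theorem integral_sq_mul_gaussian_mul_besselI1 {b c : ℝ} (hb : 0 < b) (hc : 0 < c) :
    ∫ y in Ioi (0 : ℝ), y ^ 2 * exp (-b * y ^ 2) * besselI1 (c * y) =
      c / (4 * b ^ 2) * exp (c ^ 2 / (4 * b)) := by
  set F : ℕ → ℝ → ℝ := fun k y => (c / 2) ^ (2 * k + 1) / (k.factorial * (k + 1).factorial) *
    (y ^ (2 * (k + 1) + 1) * exp (-b * y ^ 2)) with hF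
  have hFint : ∀ k, ∫ y in Ioi (0 : ℝ), F k y =
      c / (4 * b ^ 2) * ((c ^ 2 / (4 * b)) ^ k / k.factorial) := fun k => by
    rw [hF, integral_const_mul, integral_Ioi_odd_pow_mul_gaussian _ hb, pow_succ, pow_mul, div_pow,
      div_pow, div_pow, mul_pow]
    norm_num
    field_simp
    ring
  have hFnorm : ∀ k, ∫ y in Ioi (0 : ℝ), ‖F k y‖ = ∫ y in Ioi (0 : ℝ), F k y := fun k =>
    setIntegral_congr_fun measurableSet_Ioi fun y hy =>
      Real.norm_of_nonneg (by have := mem_Ioi.1 hy; positivity)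
  have h := hasSum_integral_of_summable_integral_norm (F := F) (μ := volume.restrict (Ioi 0))
    (fun k => (integrableOn_Ioi_odd_pow_mul_gaussian (k + 1) hb).const_mul _) (by
      simp only [hFnorm, hFint]
      exact (Real.summable_pow_div_factorial _).mul_left _)
  simp only [hFint] at h
  have h' := (NormedSpace.expSeries_div_hasSum_exp (𝔸 := ℝ) (c ^ 2 / (4 * b))).mul_left
    (c / (4 * b ^ 2))
  rw [← Real.exp_eq_exp_ℝ] at h'
  rw [← h.unique h']
  refine integral_congr_ae (.of_forall fun y => ?_)
  simp only [besselI1, hF]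
  rw [← tsum_mul_left]
  refine tsum_congr fun k => ?_
  rw [mul_div_right_comm, mul_pow]
  ring

theorem integrableOn_sq_mul_gaussian_mul_besselI1 {b c : ℝ} (hb : 0 < b) (hc : 0 < c) :
    IntegrableOn (fun y => y ^ 2 * exp (-b * y ^ 2) * besselI1 (c * y)) (Ioi 0) :=
  .of_integral_ne_zero (by rw [integral_sq_mul_gaussian_mul_besselI1 hb hc]; positivity)

theorem integral_gaussian_mul_besselI1 {b c : ℝ} (hb : 0 < b) (hc : 0 < c) :
    ∫ x in Ioi (0 : ℝ), exp (-b * x ^ 2) * besselI1 (c * x) =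
      (exp (c ^ 2 / (4 * b)) - 1) / c := by
  set F : ℕ → ℝ → ℝ := fun k y => (c / 2) ^ (2 * k + 1) / (k.factorial * (k + 1).factorial) *
    (y ^ (2 * k + 1) * exp (-b * y ^ 2)) with hF
  have hFint : ∀ k, ∫ y in Ioi (0 : ℝ), F k y =
      (c ^ 2 / (4 * b)) ^ (k + 1) / (k + 1).factorial / c := fun k => by
    rw [hF, integral_const_mul, integral_Ioi_odd_pow_mul_gaussian _ hb, pow_succ, pow_mul, div_pow,
      div_pow, div_pow, mul_pow]
    norm_num
    field_simp
    ring
  have hFnorm : ∀ k, ∫ y in Ioi (0 : ℝ), ‖F k y‖ = ∫ y in Ioi (0 : ℝ), F k y := fun k =>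
    setIntegral_congr_fun measurableSet_Ioi fun y hy =>
      Real.norm_of_nonneg (by have := mem_Ioi.1 hy; positivity)
  have h' := NormedSpace.expSeries_div_hasSum_exp (𝔸 := ℝ) (c ^ 2 / (4 * b))
  rw [← Real.exp_eq_exp_ℝ, ← hasSum_nat_add_iff' 1] at h'
  simp only [Finset.range_one, Finset.sum_singleton, pow_zero, Nat.factorial_zero, Nat.cast_one,
    div_one] at h'
  replace h' := h'.div_const c
  have h := hasSum_integral_of_summable_integral_norm (F := F) (μ := volume.restrict (Ioi 0))
    (fun k => (integrableOn_Ioi_odd_pow_mul_gaussian k hb).const_mul _) (by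
      simp only [hFnorm, hFint]
      exact h'.summable)
  simp only [hFint] at h
  rw [← h.unique h']
  refine integral_congr_ae (.of_forall fun y => ?_)
  simp only [besselI1, hF]
  rw [← tsum_mul_left]
  refine tsum_congr fun k => ?_
  rw [mul_div_right_comm, mul_pow]
  ring

theorem integrableOn_gaussian_mul_besselI1 {b c : ℝ} (hb : 0 < b) (hc : 0 < c) :
    IntegrableOn (fun x => exp (-b * x ^ 2) * besselI1 (c * x)) (Ioi 0) := by
  refine .of_integral_ne_zero ?_
  rw [integral_gaussian_mul_besselI1 hb hc]
  have : 1 < exp (c ^ 2 / (4 * b)) := one_lt_exp_iff.2 (by positivity)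
  exact (div_pos (sub_pos.2 this) hc).ne'

/-- The substitution `u = r * exp t` carries `Ioi 0` to the whole line. -/
theorem integral_Ioi_eq_integral_comp_mul_exp {r : ℝ} (hr : 0 < r) (g : ℝ → ℝ) :
    ∫ u in Ioi (0 : ℝ), g u = ∫ t, r * exp t * g (r * exp t) := by
  have himg : (fun t => r * exp t) '' univ = Ioi 0 := by
    ext u
    simp only [image_univ, mem_range, mem_Ioi]
    refine ⟨fun ⟨t, ht⟩ => ht ▸ by positivity, fun hu => ⟨log (u / r), ?_⟩⟩
    rw [exp_log (by positivity)]
    field_simp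
  have h := integral_image_eq_integral_abs_deriv_smul (s := univ) (f := fun t => r * exp t)
    (f' := fun t => r * exp t) .univ (fun t _ => ((hasDerivAt_exp t).const_mul r).hasDerivWithinAt)
    (fun a _ b _ hab => exp_injective (mul_left_cancel₀ hr.ne' hab)) g
  rw [himg, setIntegral_univ] at h
  rw [h]
  refine integral_congr_ae (.of_forall fun t => ?_)
  simp only [smul_eq_mul]
  rw [abs_of_pos (by positivity)]

theorem two_mul_besselK1 {z : ℝ} (hz : 0 < z) :
    2 * besselK1 z = ∫ t, exp t * exp (-z * cosh t) := by
  have hint : Integrable fun t => exp t * exp (-z * cosh t) := by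
    refine .of_integral_ne_zero (ne_of_gt ?_)
    have h := integral_Ioi_eq_integral_comp_mul_exp one_pos fun u => exp (-z * ((u + u⁻¹) / 2))
    simp only [one_mul, ← exp_neg, ← cosh_eq] at h
    rw [← h, setIntegral_pos_iff_support_of_nonneg_ae (.of_forall fun u => (exp_pos _).le)]
    · have : Function.support (fun u : ℝ => exp (-z * ((u + u⁻¹) / 2))) = univ :=
        Function.support_eq_univ fun u => (exp_pos _).ne'
      rw [this]
      simp
    · refine (exp_neg_integrableOn_Ioi 0 (half_pos hz)).mono' (by fun_prop) ?_
      refine (ae_restrict_mem measurableSet_Ioi).mono fun u hu => ?_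
      rw [Real.norm_of_nonneg (exp_pos _).le, exp_le_exp]
      have : 0 < z * u⁻¹ := mul_pos hz (inv_pos.2 hu)
      linarith
  have hneg : ∫ t in Iic (0 : ℝ), exp t * exp (-z * cosh t) =
      ∫ t in Ioi (0 : ℝ), exp (-t) * exp (-z * cosh t) := by
    have := integral_comp_neg_Ioi 0 fun t => exp t * exp (-z * cosh t)
    simpa using this.symm
  have hneg' : IntegrableOn (fun t => exp (-t) * exp (-z * cosh t)) (Ioi 0) := by
    have := hint.comp_neg
    simp only [cosh_neg] at this
    exact this.integrableOn
  rw [← intervalIntegral.integral_Iic_add_Ioi (b := 0) hint.integrableOn hint.integrableOn, hneg,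
    ← integral_add hneg' hint.integrableOn, besselK1, ← integral_const_mul]
  refine integral_congr_ae (.of_forall fun t => ?_)
  simp only [cosh_eq t]
  ring

theorem integral_two_mul_exp_neg_eq_besselK1 {β γ : ℝ} (hβ : 0 < β) (hγ : 0 < γ) :
    ∫ y in Ioi (0 : ℝ), 2 * y * exp (-β / y ^ 2 - γ * y ^ 2) =
      2 * (β / γ).sqrt * besselK1 (2 * (β * γ).sqrt) := by
  have hr : 0 < (β / γ).sqrt := by positivity
  have h1 : γ * (β / γ).sqrt = (β * γ).sqrt := by
    rw [show β * γ = γ ^ 2 * (β / γ) by field_simp, sqrt_mul (by positivity), sqrt_sq hγ.le]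
  have h2 : β / (β / γ).sqrt = (β * γ).sqrt := by
    rw [← h1, div_eq_iff hr.ne', mul_assoc, mul_self_sqrt (by positivity)]
    field_simp
  rw [integral_Ioi_two_mul_comp_sq fun u => exp (-β / u - γ * u),
    integral_Ioi_eq_integral_comp_mul_exp hr, mul_right_comm,
    two_mul_besselK1 (by positivity), mul_comm _ (β / γ).sqrt, ← integral_const_mul]
  refine integral_congr_ae (.of_forall fun t => ?_)
  simp only [mul_assoc]
  congr 3
  rw [← mul_assoc γ, h1, neg_div, ← div_div, h2, cosh_eq, exp_neg]
  ring

theorem integrable_prod_mul_fst {K : ℝ × ℝ → ℝ} {m g : ℝ → ℝ} (hKm : Measurable K)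
    (hg : Measurable g) (hK : ∀ x > 0, ∀ y > 0, 0 ≤ K (x, y))
    (hint : ∀ x > 0, IntegrableOn (fun y => K (x, y)) (Ioi 0))
    (hm : ∀ x > 0, ∫ y in Ioi (0 : ℝ), K (x, y) = m x)
    (hmg : IntegrableOn (fun x => m x * g x) (Ioi 0)) :
    Integrable (fun p => K p * g p.1)
      ((volume.restrict (Ioi (0 : ℝ))).prod (volume.restrict (Ioi (0 : ℝ)))) := by
  rw [integrable_prod_iff (by fun_prop)]
  constructor
  · exact (ae_restrict_mem measurableSet_Ioi).mono fun x hx => (hint x hx).mul_const (g x)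
  · refine IntegrableOn.congr_fun hmg.norm (fun x hx => ?_) measurableSet_Ioi
    simp only [norm_mul]
    rw [integral_mul_const, ← hm x hx]
    congr 1
    rw [Real.norm_of_nonneg
      (setIntegral_nonneg measurableSet_Ioi fun y hy => hK x hx y hy)]
    exact setIntegral_congr_fun measurableSet_Ioi fun y hy =>
      (Real.norm_of_nonneg (hK x hx y hy)).symm

theorem integral_prod_mul_fst {K : ℝ × ℝ → ℝ} {m g : ℝ → ℝ} (hKm : Measurable K)
    (hg : Measurable g) (hK : ∀ x > 0, ∀ y > 0, 0 ≤ K (x, y))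
    (hint : ∀ x > 0, IntegrableOn (fun y => K (x, y)) (Ioi 0))
    (hm : ∀ x > 0, ∫ y in Ioi (0 : ℝ), K (x, y) = m x)
    (hmg : IntegrableOn (fun x => m x * g x) (Ioi 0)) :
    ∫ p, K p * g p.1 ∂((volume.restrict (Ioi (0 : ℝ))).prod (volume.restrict (Ioi (0 : ℝ)))) =
      ∫ x in Ioi (0 : ℝ), m x * g x := by
  rw [integral_prod _ (integrable_prod_mul_fst hKm hg hK hint hm hmg)]
  refine setIntegral_congr_fun measurableSet_Ioi fun x hx => ?_
  simp only
  rw [integral_mul_const, hm x hx]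

theorem integrable_prod_comp_mul_div {f : ℝ × ℝ → ℝ} (hf : Measurable f)
    (hint : Integrable f
      ((volume.restrict (Ioi (0 : ℝ))).prod (volume.restrict (Ioi (0 : ℝ)))))
    {κ : ℝ} (hκ : 0 < κ) :
    Integrable (fun p => κ / p.2 * f (κ / p.2 * p.1, p.2))
      ((volume.restrict (Ioi (0 : ℝ))).prod (volume.restrict (Ioi (0 : ℝ)))) := by
  have h := (integrable_prod_iff' hint.1).1 hint
  rw [integrable_prod_iff' (by fun_prop)]
  constructor
  · filter_upwards [h.1, ae_restrict_mem measurableSet_Ioi] with y hy hy0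
    refine Integrable.const_mul ?_ _
    refine (integrableOn_Ioi_comp_mul_left_iff (fun x => f (x, y)) 0 (div_pos hκ hy0)).2 ?_
    rwa [mul_zero]
  · refine IntegrableOn.congr_fun h.2 (fun y hy => ?_) measurableSet_Ioi
    have hc : 0 < κ / y := div_pos hκ hy
    have := integral_comp_mul_left_Ioi (fun x => ‖f (x, y)‖) 0 hc
    simp only [norm_mul]
    rw [integral_const_mul, this, Real.norm_of_nonneg hc.le, smul_eq_mul, mul_zero,
      mul_inv_cancel_left₀ hc.ne']

theorem integral_prod_comp_mul_div {f : ℝ × ℝ → ℝ} (hf : Measurable f)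
    (hint : Integrable f
      ((volume.restrict (Ioi (0 : ℝ))).prod (volume.restrict (Ioi (0 : ℝ)))))
    {κ : ℝ} (hκ : 0 < κ) :
    ∫ p, κ / p.2 * f (κ / p.2 * p.1, p.2)
        ∂((volume.restrict (Ioi (0 : ℝ))).prod (volume.restrict (Ioi (0 : ℝ)))) =
      ∫ p, f p ∂((volume.restrict (Ioi (0 : ℝ))).prod (volume.restrict (Ioi (0 : ℝ)))) := by
  rw [integral_prod_symm _ hint, integral_prod_symm _ (integrable_prod_comp_mul_div hf hint hκ)]
  refine setIntegral_congr_fun measurableSet_Ioi fun y hy => ?_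
  have hc : 0 < κ / y := div_pos hκ hy
  have := integral_comp_mul_left_Ioi (fun x => f (x, y)) 0 hc
  simp only
  rw [integral_const_mul, this, smul_eq_mul, mul_zero, mul_inv_cancel_left₀ hc.ne']

/-- The joint density of input and output, with noise power `s` and signal power `S`. -/
noncomputable def jointDensity (s S : ℝ) (p : ℝ × ℝ) : ℝ :=
  4 / (s * S) * (p.2 ^ 2 * exp (-(s⁻¹ + S⁻¹) * p.1 ^ 2) * exp (-s⁻¹ * p.2 ^ 2) *
    besselI1 (2 / s * p.1 * p.2))

theorem measurable_jointDensity (s S : ℝ) : Measurable (jointDensity s S) := by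
  have := measurable_besselI1
  unfold jointDensity
  fun_prop

theorem besselI1_pos {z : ℝ} (hz : 0 < z) : 0 < besselI1 z :=
  lt_of_lt_of_le (half_pos hz) (half_le_besselI1 hz.le)

section Joint

variable {s S : ℝ}

theorem jointDensity_pos (hs : 0 < s) (hS : 0 < S) {x y : ℝ} (hx : 0 < x) (hy : 0 < y) :
    0 < jointDensity s S (x, y) := by
  have := besselI1_pos (z := 2 / s * x * y) (by positivity)
  simp only [jointDensity]
  positivity

theorem rayleighDensity_mul_condDensity {σN σS x y : ℝ} (hx : 0 < x) :
    rayleighDensity σS x * condDensity σN x y = jointDensity (σN ^ 2) (σS ^ 2) (x, y) := by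
  simp only [rayleighDensity, condDensity, jointDensity]
  have h1 : exp (-(x ^ 2 + y ^ 2) / σN ^ 2) =
      exp (-x ^ 2 / σN ^ 2) * exp (-(σN ^ 2)⁻¹ * y ^ 2) := by
    rw [← exp_add]; ring_nf
  have h2 : exp (-((σN ^ 2)⁻¹ + (σS ^ 2)⁻¹) * x ^ 2) =
      exp (-x ^ 2 / σN ^ 2) * exp (-x ^ 2 / σS ^ 2) := by
    rw [← exp_add]; ring_nf
  have h3 : 2 * x * y / σN ^ 2 = 2 / σN ^ 2 * x * y := by ring
  rw [h1, h2, h3, mul_comm (σN ^ 2) (σS ^ 2), ← div_div]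
  field_simp
  ring

theorem jointDensity_section_fst (x : ℝ) :
    (fun y => jointDensity s S (x, y)) = fun y => 4 / (s * S) * exp (-(s⁻¹ + S⁻¹) * x ^ 2) *
      (y ^ 2 * exp (-s⁻¹ * y ^ 2) * besselI1 (2 / s * x * y)) := by
  ext y
  simp only [jointDensity]
  ring

theorem jointDensity_section_snd (y : ℝ) :
    (fun x => jointDensity s S (x, y)) = fun x => 4 / (s * S) * (y ^ 2 * exp (-s⁻¹ * y ^ 2)) *
      (exp (-(s⁻¹ + S⁻¹) * x ^ 2) * besselI1 (2 / s * y * x)) := by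
  ext x
  simp only [jointDensity, mul_right_comm _ y x]
  ring

theorem integrableOn_jointDensity_fst (hs : 0 < s) {x : ℝ} (hx : 0 < x) :
    IntegrableOn (fun y => jointDensity s S (x, y)) (Ioi 0) := by
  rw [jointDensity_section_fst]
  exact (integrableOn_sq_mul_gaussian_mul_besselI1 (by positivity) (by positivity)).const_mul _

theorem integrableOn_jointDensity_snd (hs : 0 < s) (hS : 0 < S) {y : ℝ} (hy : 0 < y) :
    IntegrableOn (fun x => jointDensity s S (x, y)) (Ioi 0) := by
  rw [jointDensity_section_snd]
  exact (integrableOn_gaussian_mul_besselI1 (by positivity) (by positivity)).const_mul _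

theorem integral_jointDensity_fst (hs : 0 < s) (hS : 0 < S) {x : ℝ} (hx : 0 < x) :
    ∫ y in Ioi (0 : ℝ), jointDensity s S (x, y) = S⁻¹ * (2 * x * exp (-S⁻¹ * x ^ 2)) := by
  rw [jointDensity_section_fst, integral_const_mul,
    integral_sq_mul_gaussian_mul_besselI1 (by positivity) (by positivity)]
  have h : exp (-S⁻¹ * x ^ 2) =
      exp (-(s⁻¹ + S⁻¹) * x ^ 2) * exp ((2 / s * x) ^ 2 / (4 * s⁻¹)) := by
    rw [← exp_add]
    congr 1
    field_simp
    ring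
  rw [h]
  field_simp

theorem integral_jointDensity_snd (hs : 0 < s) (hS : 0 < S) {y : ℝ} (hy : 0 < y) :
    ∫ x in Ioi (0 : ℝ), jointDensity s S (x, y) =
      S⁻¹ * (2 * y * exp (-(s + S)⁻¹ * y ^ 2) - 2 * y * exp (-s⁻¹ * y ^ 2)) := by
  rw [jointDensity_section_snd, integral_const_mul,
    integral_gaussian_mul_besselI1 (by positivity) (by positivity)]
  have h : exp (-(s + S)⁻¹ * y ^ 2) =
      exp (-s⁻¹ * y ^ 2) * exp ((2 / s * y) ^ 2 / (4 * (s⁻¹ + S⁻¹))) := by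
    rw [← exp_add]
    congr 1
    field_simp
    ring
  rw [h]
  field_simp
  ring

theorem integrable_jointDensity_mul_fst (hs : 0 < s) (hS : 0 < S) {g : ℝ → ℝ} (hg : Measurable g)
    (hint : ∀ a > 0, IntegrableOn (fun x => 2 * x * exp (-a * x ^ 2) * g x) (Ioi 0)) :
    Integrable (fun p => jointDensity s S p * g p.1)
      ((volume.restrict (Ioi (0 : ℝ))).prod (volume.restrict (Ioi (0 : ℝ)))) := by
  refine integrable_prod_mul_fst (measurable_jointDensity s S) hg
    (fun x hx y hy => (jointDensity_pos hs hS hx hy).le)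
    (fun x hx => integrableOn_jointDensity_fst hs hx)
    (fun x hx => integral_jointDensity_fst hs hS hx) ?_
  simp only [mul_assoc S⁻¹]
  exact (hint S⁻¹ (by positivity)).const_mul _

theorem integral_jointDensity_mul_fst (hs : 0 < s) (hS : 0 < S) {g : ℝ → ℝ} (hg : Measurable g)
    (hint : ∀ a > 0, IntegrableOn (fun x => 2 * x * exp (-a * x ^ 2) * g x) (Ioi 0)) :
    ∫ p, jointDensity s S p * g p.1
      ∂((volume.restrict (Ioi (0 : ℝ))).prod (volume.restrict (Ioi (0 : ℝ)))) =
      S⁻¹ * ∫ x in Ioi (0 : ℝ), 2 * x * exp (-S⁻¹ * x ^ 2) * g x := by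
  rw [integral_prod_mul_fst (measurable_jointDensity s S) hg
    (fun x hx y hy => (jointDensity_pos hs hS hx hy).le)
    (fun x hx => integrableOn_jointDensity_fst hs hx)
    (fun x hx => integral_jointDensity_fst hs hS hx) (by
      simp only [mul_assoc S⁻¹]
      exact (hint S⁻¹ (by positivity)).const_mul _)]
  simp only [mul_assoc S⁻¹]
  rw [integral_const_mul]

theorem integrable_jointDensity_mul_snd (hs : 0 < s) (hS : 0 < S) {g : ℝ → ℝ} (hg : Measurable g)
    (hint : ∀ a > 0, IntegrableOn (fun x => 2 * x * exp (-a * x ^ 2) * g x) (Ioi 0)) :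
    Integrable (fun p => jointDensity s S p * g p.2)
      ((volume.restrict (Ioi (0 : ℝ))).prod (volume.restrict (Ioi (0 : ℝ)))) := by
  refine (integrable_prod_mul_fst ((measurable_jointDensity s S).comp measurable_swap) hg
    (fun y hy x hx => (jointDensity_pos hs hS hx hy).le)
    (fun y hy => integrableOn_jointDensity_snd hs hS hy)
    (fun y hy => integral_jointDensity_snd hs hS hy) ?_).swap
  simp only [mul_assoc S⁻¹, sub_mul]
  exact ((hint _ (by positivity)).sub (hint _ (by positivity))).const_mul _

theorem integral_jointDensity_mul_snd (hs : 0 < s) (hS : 0 < S) {g : ℝ → ℝ} (hg : Measurable g)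
    (hint : ∀ a > 0, IntegrableOn (fun x => 2 * x * exp (-a * x ^ 2) * g x) (Ioi 0)) :
    ∫ p, jointDensity s S p * g p.2
      ∂((volume.restrict (Ioi (0 : ℝ))).prod (volume.restrict (Ioi (0 : ℝ)))) =
      S⁻¹ * ((∫ y in Ioi (0 : ℝ), 2 * y * exp (-(s + S)⁻¹ * y ^ 2) * g y) -
        ∫ y in Ioi (0 : ℝ), 2 * y * exp (-s⁻¹ * y ^ 2) * g y) := by
  rw [← integral_sub (hint _ (by positivity)) (hint _ (by positivity)), ← integral_const_mul,
    ← integral_prod_swap]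
  refine (integral_prod_mul_fst ((measurable_jointDensity s S).comp measurable_swap) hg
    (fun y hy x hx => (jointDensity_pos hs hS hx hy).le)
    (fun y hy => integrableOn_jointDensity_snd hs hS hy)
    (fun y hy => integral_jointDensity_snd hs hS hy) ?_).trans ?_
  · simp only [mul_assoc S⁻¹, sub_mul]
    exact ((hint _ (by positivity)).sub (hint _ (by positivity))).const_mul _
  · simp only [mul_assoc S⁻¹, sub_mul]

theorem integrableOn_gaussian_mul_sq {a : ℝ} (ha : 0 < a) :
    IntegrableOn (fun x => 2 * x * exp (-a * x ^ 2) * x ^ 2) (Ioi 0) := by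
  refine ((integrableOn_Ioi_odd_pow_mul_gaussian 1 ha).const_mul 2).congr (.of_forall fun x => ?_)
  simp only
  ring

theorem integral_gaussian_mul_sq {a : ℝ} (ha : 0 < a) :
    ∫ x in Ioi (0 : ℝ), 2 * x * exp (-a * x ^ 2) * x ^ 2 = (a ^ 2)⁻¹ := by
  have h := integral_Ioi_odd_pow_mul_gaussian 1 ha
  have h' : ∫ x in Ioi (0 : ℝ), 2 * x * exp (-a * x ^ 2) * x ^ 2 =
      ∫ x in Ioi (0 : ℝ), 2 * (x ^ (2 * 1 + 1) * exp (-a * x ^ 2)) :=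
    integral_congr_ae (.of_forall fun x => by simp only; ring)
  rw [h', integral_const_mul, h]
  norm_num
  field_simp

theorem integrableOn_gaussian_mul_one {a : ℝ} (ha : 0 < a) :
    IntegrableOn (fun x => 2 * x * exp (-a * x ^ 2) * 1) (Ioi 0) := by
  refine ((integrableOn_Ioi_odd_pow_mul_gaussian 0 ha).const_mul 2).congr (.of_forall fun x => ?_)
  simp only
  ring

theorem integral_gaussian_mul_one {a : ℝ} (ha : 0 < a) :
    ∫ x in Ioi (0 : ℝ), 2 * x * exp (-a * x ^ 2) * 1 = a⁻¹ := by
  have h := integral_Ioi_odd_pow_mul_gaussian 0 ha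
  have h' : ∫ x in Ioi (0 : ℝ), 2 * x * exp (-a * x ^ 2) * 1 =
      ∫ x in Ioi (0 : ℝ), 2 * (x ^ (2 * 0 + 1) * exp (-a * x ^ 2)) :=
    integral_congr_ae (.of_forall fun x => by simp only; ring)
  rw [h', integral_const_mul, h]
  norm_num
  field_simp

theorem ae_prod_restrict_Ioi_pos :
    ∀ᵐ p : ℝ × ℝ ∂((volume.restrict (Ioi (0 : ℝ))).prod (volume.restrict (Ioi (0 : ℝ)))),
      0 < p.1 ∧ 0 < p.2 := by
  rw [Measure.prod_restrict]
  exact (ae_restrict_mem (measurableSet_Ioi.prod measurableSet_Ioi)).mono fun p hp => hp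

theorem integrable_jointDensity_mul_log_besselI1 (hs : 0 < s) (hS : 0 < S) :
    Integrable (fun p => jointDensity s S p * log (besselI1 (2 / s * p.1 * p.2)))
      ((volume.restrict (Ioi (0 : ℝ))).prod (volume.restrict (Ioi (0 : ℝ)))) := by
  have hlog := fun a ha => integrableOn_gaussian_mul_log (a := a) ha
  have hsq := fun a ha => integrableOn_gaussian_mul_sq (a := a) ha
  have hone := fun a ha => integrableOn_gaussian_mul_one (a := a) ha
  have hsq' : Measurable fun x : ℝ => x ^ 2 := by fun_prop
  have hJ := measurable_jointDensity s S
  have hI := measurable_besselI1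
  refine Integrable.mono' ((((integrable_jointDensity_mul_fst hs hS measurable_log hlog).norm.add
    (integrable_jointDensity_mul_snd hs hS measurable_log hlog).norm).add
    ((integrable_jointDensity_mul_fst hs hS (g := fun _ => 1) measurable_const hone).mul_const
      |log s|)).add
    (((integrable_jointDensity_mul_fst hs hS hsq' hsq).add
      (integrable_jointDensity_mul_snd hs hS hsq' hsq)).mul_const s⁻¹)) (by fun_prop) ?_
  filter_upwards [ae_prod_restrict_Ioi_pos] with p ⟨h1, h2⟩
  have hJ0 := jointDensity_pos hs hS h1 h2
  have hb := abs_log_besselI1_le (z := 2 / s * p.1 * p.2) (by positivity)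
  have hl : log (2 / s * p.1 * p.2 / 2) = log p.1 + log p.2 - log s := by
    rw [show 2 / s * p.1 * p.2 / 2 = p.1 * p.2 / s by field_simp,
      log_div (by positivity) hs.ne', log_mul h1.ne' h2.ne']
  have h3 : |log p.1 + log p.2 - log s| ≤ |log p.1| + |log p.2| + |log s| :=
    (abs_sub _ _).trans (by gcongr; exact abs_add_le _ _)
  have h4 : 2 / s * p.1 * p.2 ≤ (p.1 ^ 2 + p.2 ^ 2) * s⁻¹ := by
    rw [show 2 / s * p.1 * p.2 = (2 * p.1 * p.2) * s⁻¹ by ring]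
    gcongr
    exact two_mul_le_add_sq _ _
  simp only [Pi.add_apply, norm_mul, Real.norm_eq_abs, abs_of_pos hJ0]
  rw [hl] at hb
  calc jointDensity s S p * |log (besselI1 (2 / s * p.1 * p.2))|
      ≤ jointDensity s S p *
        (|log p.1| + |log p.2| + |log s| + (p.1 ^ 2 + p.2 ^ 2) * s⁻¹) := by
        gcongr; linarith
    _ = _ := by ring

theorem integral_jointDensity_mul_log_besselI1 (hs : 0 < s) (hS : 0 < S) :
    ∫ p, jointDensity s S p * log (besselI1 (2 / s * p.1 * p.2))
      ∂((volume.restrict (Ioi (0 : ℝ))).prod (volume.restrict (Ioi (0 : ℝ)))) =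
      (S / s)⁻¹ * sqrt (1 + (S / s)⁻¹) * Fint (S / s) := by
  have hJ := measurable_jointDensity s S
  have hI := measurable_besselI1
  have hint := integrable_jointDensity_mul_log_besselI1 hs hS
  have hmeas : Measurable fun p : ℝ × ℝ =>
    jointDensity s S p * log (besselI1 (2 / s * p.1 * p.2)) := by fun_prop
  rw [← integral_prod_comp_mul_div hmeas hint (half_pos hs),
    integral_prod _ (integrable_prod_comp_mul_div hmeas hint (half_pos hs)), Fint,
    ← integral_const_mul]
  refine setIntegral_congr_fun measurableSet_Ioi fun ξ hξ => ?_
  rw [mem_Ioi] at hξ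
  set β := (s⁻¹ + S⁻¹) * (s / 2 * ξ) ^ 2 with hβ
  have hβ0 : 0 < β := by positivity
  have hinner : ∀ y ∈ Ioi (0 : ℝ), s / 2 / y * (jointDensity s S (s / 2 / y * ξ, y) *
      log (besselI1 (2 / s * (s / 2 / y * ξ) * y))) =
      S⁻¹ * (besselI1 ξ * log (besselI1 ξ)) * (2 * y * exp (-β / y ^ 2 - s⁻¹ * y ^ 2)) := by
    intro y hy
    have hy0 : y ≠ 0 := ne_of_gt hy
    have h1 : 2 / s * (s / 2 / y * ξ) * y = ξ := by field_simp
    have h2 : exp (-β / y ^ 2 - s⁻¹ * y ^ 2) =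
        exp (-(s⁻¹ + S⁻¹) * (s / 2 / y * ξ) ^ 2) * exp (-s⁻¹ * y ^ 2) := by
      rw [← exp_add, hβ]
      congr 1
      field_simp
      ring
    simp only [jointDensity, h1, h2]
    field_simp
    ring
  simp only
  rw [setIntegral_congr_fun measurableSet_Ioi hinner, integral_const_mul,
    integral_two_mul_exp_neg_eq_besselK1 hβ0 (inv_pos.2 hs)]
  have h1 : sqrt (β / s⁻¹) = s * ξ / 2 * sqrt (1 + (S / s)⁻¹) := by
    rw [show β / s⁻¹ = (s * ξ / 2) ^ 2 * (1 + (S / s)⁻¹) by rw [hβ]; field_simp,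
      sqrt_mul (by positivity), sqrt_sq (by positivity)]
  have h2 : 2 * sqrt (β * s⁻¹) = sqrt (1 + (S / s)⁻¹) * ξ := by
    rw [show β * s⁻¹ = (ξ / 2) ^ 2 * (1 + (S / s)⁻¹) by rw [hβ]; field_simp,
      sqrt_mul (by positivity), sqrt_sq (by positivity)]
    ring
  rw [h1, h2]
  field_simp

end Joint

theorem log_condDensity {σN x y : ℝ} (hσN : 0 < σN) (hx : 0 < x) (hy : 0 < y) :
    log (condDensity σN x y) = log 2 - log (σN ^ 2) + 2 * log y - log x -
      (x ^ 2 + y ^ 2) * (σN ^ 2)⁻¹ + log (besselI1 (2 / σN ^ 2 * x * y)) := by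
  have h3 : 2 * x * y / σN ^ 2 = 2 / σN ^ 2 * x * y := by ring
  have h := besselI1_pos (z := 2 / σN ^ 2 * x * y) (by positivity)
  rw [condDensity, h3, log_mul (by positivity) h.ne', log_mul (by positivity) (exp_pos _).ne',
    log_exp, log_mul (by positivity) (by positivity), log_div (by positivity) (by positivity),
    log_div (by positivity) hx.ne', log_pow y]
  push_cast
  ring

section LinearCombination

variable {α : Type*} [MeasurableSpace α] {μ : Measure α} {f₁ f₂ f₃ f₄ f₅ f₆ : α → ℝ}

theorem integrable_linear_combination (h₁ : Integrable f₁ μ) (h₂ : Integrable f₂ μ)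
    (h₃ : Integrable f₃ μ) (h₄ : Integrable f₄ μ) (h₅ : Integrable f₅ μ) (h₆ : Integrable f₆ μ)
    (c d : ℝ) :
    Integrable (fun p => c * f₁ p + 2 * f₂ p - f₃ p - (f₄ p + f₅ p) * d + f₆ p) μ :=
  (((((h₁.const_mul c).add (h₂.const_mul 2)).sub h₃).sub ((h₄.add h₅).mul_const d)).add h₆)

theorem integral_linear_combination (h₁ : Integrable f₁ μ) (h₂ : Integrable f₂ μ)
    (h₃ : Integrable f₃ μ) (h₄ : Integrable f₄ μ) (h₅ : Integrable f₅ μ) (h₆ : Integrable f₆ μ)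
    (c d : ℝ) :
    ∫ p, (c * f₁ p + 2 * f₂ p - f₃ p - (f₄ p + f₅ p) * d + f₆ p) ∂μ =
      c * (∫ p, f₁ p ∂μ) + 2 * (∫ p, f₂ p ∂μ) - (∫ p, f₃ p ∂μ) -
        ((∫ p, f₄ p ∂μ) + ∫ p, f₅ p ∂μ) * d + ∫ p, f₆ p ∂μ := by
  have h₁₂ : Integrable (fun p => c * f₁ p + 2 * f₂ p) μ :=
    (h₁.const_mul c).add (h₂.const_mul 2)
  have h₁₂₃ : Integrable (fun p => c * f₁ p + 2 * f₂ p - f₃ p) μ := h₁₂.sub h₃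
  have h₄₅ : Integrable (fun p => (f₄ p + f₅ p) * d) μ := (h₄.add h₅).mul_const d
  have h₁₅ : Integrable (fun p => c * f₁ p + 2 * f₂ p - f₃ p - (f₄ p + f₅ p) * d) μ :=
    h₁₂₃.sub h₄₅
  rw [integral_add h₁₅ h₆, integral_sub h₁₂₃ h₄₅, integral_sub h₁₂ h₃,
    integral_add (h₁.const_mul c) (h₂.const_mul 2), integral_const_mul, integral_const_mul,
    integral_mul_const, integral_add h₄ h₅]

end LinearCombination

/-- Lemma 2: closed form for the conditional differential entropy
h_{Y|X} = −∫₀^∞ p_X(x) (∫₀^∞ p_{Y|X}(y|x) log p_{Y|X}(y|x) dy) dx. -/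
theorem stmt_4 (σN σS ρ : ℝ) (hσN : 0 < σN) (hσS : 0 < σS) (hρ : ρ = σS ^ 2 / σN ^ 2) :
    -∫ x in Ioi (0 : ℝ), rayleighDensity σS x *
        ∫ y in Ioi (0 : ℝ), condDensity σN x y * Real.log (condDensity σN x y) =
      Real.log (Real.sqrt (σS ^ 2)) + 2 * (1 + ρ) - (1 + ρ⁻¹) * Real.log (1 + ρ) -
        ρ⁻¹ * Real.sqrt (1 + ρ⁻¹) * Fint ρ - digamma 1 / 2 - Real.log 2 := by
  have hs : 0 < σN ^ 2 := by positivity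
  have hS : 0 < σS ^ 2 := by positivity
  have hleft : ∫ x in Ioi (0 : ℝ), rayleighDensity σS x *
        ∫ y in Ioi (0 : ℝ), condDensity σN x y * log (condDensity σN x y) =
      ∫ x in Ioi (0 : ℝ), ∫ y in Ioi (0 : ℝ), jointDensity (σN ^ 2) (σS ^ 2) (x, y) *
        (log 2 - log (σN ^ 2) + 2 * log y - log x -
          (x ^ 2 + y ^ 2) * (σN ^ 2)⁻¹ + log (besselI1 (2 / σN ^ 2 * x * y))) := by
    refine setIntegral_congr_fun measurableSet_Ioi fun x hx => ?_
    rw [← integral_const_mul]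
    refine setIntegral_congr_fun measurableSet_Ioi fun y hy => ?_
    rw [← mul_assoc, rayleighDensity_mul_condDensity hx, log_condDensity hσN hx hy]
  rw [hleft, log_sqrt hS.le]
  generalize σN ^ 2 = s at *
  generalize σS ^ 2 = S at *
  have hlog := fun a ha => integrableOn_gaussian_mul_log (a := a) ha
  have hsq := fun a ha => integrableOn_gaussian_mul_sq (a := a) ha
  have hone := fun a ha => integrableOn_gaussian_mul_one (a := a) ha
  have hsqm : Measurable fun x : ℝ => x ^ 2 := by fun_prop
  have i1 := integrable_jointDensity_mul_fst hs hS (g := fun _ => 1) measurable_const hone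
  have i2 := integrable_jointDensity_mul_snd hs hS measurable_log hlog
  have i3 := integrable_jointDensity_mul_fst hs hS measurable_log hlog
  have i4 := integrable_jointDensity_mul_fst hs hS hsqm hsq
  have i5 := integrable_jointDensity_mul_snd hs hS hsqm hsq
  have i6 := integrable_jointDensity_mul_log_besselI1 hs hS
  have e1 := integral_jointDensity_mul_fst hs hS (g := fun _ => 1) measurable_const hone
  have e2 := integral_jointDensity_mul_snd hs hS measurable_log hlog
  have e3 := integral_jointDensity_mul_fst hs hS measurable_log hlog
  have e4 := integral_jointDensity_mul_fst hs hS hsqm hsq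
  have e5 := integral_jointDensity_mul_snd hs hS hsqm hsq
  have e6 := integral_jointDensity_mul_log_besselI1 hs hS
  rw [integral_gaussian_mul_one (by positivity)] at e1
  rw [integral_gaussian_mul_log (by positivity), integral_gaussian_mul_log (by positivity)] at e2
  rw [integral_gaussian_mul_log (by positivity)] at e3
  rw [integral_gaussian_mul_sq (by positivity)] at e4
  rw [integral_gaussian_mul_sq (by positivity), integral_gaussian_mul_sq (by positivity)] at e5
  have hG : (fun p => (log 2 - log s) * (jointDensity s S p * 1) +
      2 * (jointDensity s S p * log p.2) - jointDensity s S p * log p.1 -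
      (jointDensity s S p * p.1 ^ 2 + jointDensity s S p * p.2 ^ 2) * s⁻¹ +
      jointDensity s S p * log (besselI1 (2 / s * p.1 * p.2))) =
      fun p : ℝ × ℝ => jointDensity s S p * (log 2 - log s + 2 * log p.2 - log p.1 -
          (p.1 ^ 2 + p.2 ^ 2) * s⁻¹ + log (besselI1 (2 / s * p.1 * p.2))) := by
    ext p
    ring
  have hsplit := integral_linear_combination i1 i2 i3 i4 i5 i6 (log 2 - log s) s⁻¹
  have hint := integrable_linear_combination i1 i2 i3 i4 i5 i6 (log 2 - log s) s⁻¹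
  rw [hG] at hsplit hint
  rw [e1, e2, e3, e4, e5, e6, integral_prod _ hint] at hsplit
  rw [hsplit]
  have hρ1 : 1 + ρ = (s + S) / s := by rw [hρ]; field_simp
  rw [hρ1, log_div (by positivity) hs.ne', log_inv, log_inv, log_inv, hρ]
  field_simp
  ring
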